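/- Let C be an abelian category and (A, B) a cotorsion pair in C such that A is generating (every object of C is a quotient of an object of A) and B is cogenerating (every object of C embeds into an object of B). Then a cochain complex Y over C satisfies Ext¹_{Ch(C)}(Sⁿ(A), Y) = 0 for all A ∈ A and all n ∈ ℤ if and only if Y ∈ B̃; dually, a cochain complex X over C satisfies Ext¹_{Ch(C)}(X, Sⁿ(B)) = 0 for all B ∈ B and all n ∈ ℤ if and only if X ∈ Ã. -/

import Mathlib

open CategoryTheory CategoryTheory.Limits

universe w v u

variable {𝒜 : Type u} [Category.{v} 𝒜] [Abelian 𝒜]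

/-- `Ext¹(A, B) = 0`, phrased as: every short exact sequence `0 → B → E → A → 0`
splits. -/
def Ext1Zero {C : Type*} [Category C] [Abelian C] (A B : C) : Prop :=
  ∀ (E : C) (i : B ⟶ E) (p : E ⟶ A) (w : i ≫ p = 0),
    (ShortComplex.mk i p w).ShortExact → ∃ s : A ⟶ E, s ≫ p = 𝟙 A

/-- The right `Ext¹`-orthogonal class `S^⊥` of a class of objects `S`. -/
def rightPerp {C : Type*} [Category C] [Abelian C] (S : Set C) : Set C :=
  {B | ∀ A ∈ S, Ext1Zero A B}

/-- The left `Ext¹`-orthogonal class `⊥S` of a class of objects `S`. -/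
def leftPerp {C : Type*} [Category C] [Abelian C] (S : Set C) : Set C :=
  {A | ∀ B ∈ S, Ext1Zero A B}

/-- `(𝓐, 𝓑)` is a cotorsion pair: `𝓐 = ⊥𝓑` and `𝓑 = 𝓐^⊥`. -/
structure IsCotorsionPair {C : Type*} [Category C] [Abelian C] (𝓐 𝓑 : Set C) : Prop where
  left_eq : 𝓐 = leftPerp 𝓑
  right_eq : 𝓑 = rightPerp 𝓐

/-- `(𝓐, 𝓑)` is a complete cotorsion pair: a cotorsion pair admitting approximation
sequences `0 → X → B_X → A_X → 0` and `0 → B^X → A^X → X → 0` for every object `X`. -/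
structure IsCompleteCotorsionPair {C : Type*} [Category C] [Abelian C] (𝓐 𝓑 : Set C)
    extends IsCotorsionPair 𝓐 𝓑 : Prop where
  approx₁ : ∀ X : C, ∃ (B A : C) (i : X ⟶ B) (p : B ⟶ A) (w : i ≫ p = 0),
    (ShortComplex.mk i p w).ShortExact ∧ B ∈ 𝓑 ∧ A ∈ 𝓐
  approx₂ : ∀ X : C, ∃ (B A : C) (i : B ⟶ A) (p : A ⟶ X) (w : i ≫ p = 0),
    (ShortComplex.mk i p w).ShortExact ∧ B ∈ 𝓑 ∧ A ∈ 𝓐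


/-- The class `Ã` of acyclic cochain complexes all of whose components and cycle
objects `Zⁿ(X) = ker(Xⁿ → X^{n+1})` lie in `𝓐`. -/
def Tilde (𝓐 : Set 𝒜) : Set (CochainComplex 𝒜 ℤ) :=
  {X | (∀ n : ℤ, X.ExactAt n) ∧ (∀ n : ℤ, X.X n ∈ 𝓐) ∧ (∀ n : ℤ, X.cycles n ∈ 𝓐)}

/-- The cochain complex with the object `A` concentrated in degree `n`. -/
noncomputable def sph (n : ℤ) (A : 𝒜) : CochainComplex 𝒜 ℤ :=
  (HomologicalComplex.single 𝒜 (ComplexShape.up ℤ) n).obj A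

/-!
The exact functor `Sʲ` is left adjoint to the cycles functor `Zʲ`, so vanishing of
`Ext¹(Sʲ(A), Y)` gives vanishing of `Ext¹(A, Zʲ(Y))`. The converse holds once `Y` is exact in the
degree following `j`, because `Zʲ` then preserves short exact sequences starting at `Y`.
That exactness comes from the disk sequence `0 → Sʲ(A) → D → Sⁱ(A) → 0`, with `i` preceding `j`:
when `Ext¹(Sⁱ(A), Y) = 0`, the map `Sʲ(A) ⟶ Y` attached to an epimorphism `A ⟶ Zʲ(Y)` extends
to `D`, so every cycle is a boundary. For the dual statement, `Sʲ` is right adjoint to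
`X ↦ Xʲ / im d`, which for acyclic `X` is the object of cycles in the next degree.
-/

section Ext1

open Opposite

variable {C : Type*} [Category C] [Abelian C]
  {X₁ X₂ X₃ : C} {f : X₁ ⟶ X₂} {g : X₂ ⟶ X₃} {w : f ≫ g = 0}

lemma shortExact_pullback_snd (hS : (ShortComplex.mk f g w).ShortExact) {A : C} (φ : A ⟶ X₃) :
    (ShortComplex.mk (pullback.lift f 0 (by rw [w, zero_comp])) (pullback.snd g φ)
      (pullback.lift_snd _ _ _)).ShortExact := by
  have : Mono f := hS.mono_f
  have : Epi g := hS.epi_g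
  have : Mono (pullback.lift f 0 (by rw [w, zero_comp]) : X₁ ⟶ pullback g φ) :=
    mono_of_mono_fac (pullback.lift_fst _ _ _)
  refine .mk' (ShortComplex.exact_of_f_is_kernel _
    (KernelFork.IsLimit.ofι' _ _ fun k hk ↦ ?_)) this inferInstance
  have hk' : (k ≫ pullback.fst g φ) ≫ g = 0 := by
    rw [Category.assoc, pullback.condition, reassoc_of% hk, zero_comp]
  refine ⟨hS.exact.lift _ hk', pullback.hom_ext ?_ ?_⟩
  · rw [Category.assoc, pullback.lift_fst]
    exact hS.exact.lift_f _ hk'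
  · rw [Category.assoc, pullback.lift_snd, comp_zero, hk]

lemma shortExact_pullback_fst (hS : (ShortComplex.mk f g w).ShortExact) {E : C} (p : E ⟶ X₂)
    [Epi p] :
    (ShortComplex.mk (pullback.fst p f) (p ≫ g)
      (by rw [pullback.condition_assoc, w, comp_zero])).ShortExact := by
  have : Mono f := hS.mono_f
  have : Epi g := hS.epi_g
  refine .mk' (ShortComplex.exact_of_f_is_kernel _
    (KernelFork.IsLimit.ofι' _ _ fun k hk ↦ ?_)) inferInstance (epi_comp _ _)
  have hk' : (k ≫ p) ≫ g = 0 := by rw [Category.assoc, hk]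
  exact ⟨pullback.lift k (hS.exact.lift _ hk') (hS.exact.lift_f _ hk').symm,
    pullback.lift_fst _ _ _⟩

namespace Ext1Zero

lemma exists_retraction (h : Ext1Zero X₃ X₁) (hS : (ShortComplex.mk f g w).ShortExact) :
    ∃ r : X₂ ⟶ X₁, f ≫ r = 𝟙 X₁ := by
  obtain ⟨s, hs⟩ := h X₂ f g w hS
  have σ := ShortComplex.Splitting.ofExactOfSection _ hS.exact s hs hS.mono_f
  exact ⟨σ.r, σ.f_r⟩

lemma of_exists_retraction {A B : C}
    (h : ∀ (E : C) (i : B ⟶ E) (p : E ⟶ A) (w : i ≫ p = 0),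
      (ShortComplex.mk i p w).ShortExact → ∃ r : E ⟶ B, i ≫ r = 𝟙 B) :
    Ext1Zero A B := by
  intro E i p w hS
  obtain ⟨r, hr⟩ := h E i p w hS
  have σ := ShortComplex.Splitting.ofExactOfRetraction _ hS.exact r hr hS.epi_g
  exact ⟨σ.s, σ.s_g⟩

protected lemma op {A B : C} (h : Ext1Zero A B) : Ext1Zero (op B) (op A) := by
  intro E i p w hS
  obtain ⟨r, hr⟩ := h.exists_retraction hS.unop
  exact ⟨r.op, Quiver.Hom.unop_inj hr⟩

protected lemma unop {A B : Cᵒᵖ} (h : Ext1Zero A B) : Ext1Zero B.unop A.unop := by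
  intro E i p w hS
  obtain ⟨r, hr⟩ := h.exists_retraction hS.op
  exact ⟨r.unop, Quiver.Hom.op_inj hr⟩

lemma exists_lift {A : C} (h : Ext1Zero A X₁) (hS : (ShortComplex.mk f g w).ShortExact)
    (φ : A ⟶ X₃) : ∃ ψ : A ⟶ X₂, ψ ≫ g = φ := by
  obtain ⟨s, hs⟩ := h _ _ _ _ (shortExact_pullback_snd hS φ)
  exact ⟨s ≫ pullback.fst g φ, by rw [Category.assoc, pullback.condition, reassoc_of% hs]⟩

lemma exists_extension {B : C} (h : Ext1Zero X₃ B) (hS : (ShortComplex.mk f g w).ShortExact)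
    (φ : X₁ ⟶ B) : ∃ ψ : X₂ ⟶ B, f ≫ ψ = φ := by
  obtain ⟨ψ, hψ⟩ := h.op.exists_lift hS.op φ.op
  exact ⟨ψ.unop, Quiver.Hom.op_inj hψ⟩

lemma of_iso_left {A A' B : C} (h : Ext1Zero A B) (e : A ≅ A') : Ext1Zero A' B := by
  intro E i p w hS
  obtain ⟨ψ, hψ⟩ := h.exists_lift hS e.hom
  exact ⟨e.inv ≫ ψ, by rw [Category.assoc, hψ, e.inv_hom_id]⟩

lemma of_shortExact_left (hS : (ShortComplex.mk f g w).ShortExact) {B : C}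
    (h₁ : Ext1Zero X₁ B) (h₃ : Ext1Zero X₃ B) : Ext1Zero X₂ B := by
  refine of_exists_retraction fun E i p w hE ↦ ?_
  have : Epi p := hE.epi_g
  obtain ⟨r, hr⟩ := h₁.exists_retraction (shortExact_pullback_snd hE f)
  obtain ⟨ψ, rfl⟩ := h₃.exists_extension (shortExact_pullback_fst hS p) r
  exact ⟨ψ, by rwa [pullback.lift_fst_assoc] at hr⟩

lemma of_shortExact_right (hS : (ShortComplex.mk f g w).ShortExact) {A : C}
    (h₁ : Ext1Zero A X₁) (h₃ : Ext1Zero A X₃) : Ext1Zero A X₂ :=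
  (of_shortExact_left hS.op h₃.op h₁.op).unop

section Adjunction

variable {D : Type*} [Category D] [Abelian D] {L : C ⥤ D} {R : D ⥤ C}

lemma of_leftAdjoint_obj (adj : L ⊣ R) [L.PreservesMonomorphisms] {A : C} {Y : D}
    (h : Ext1Zero (L.obj A) Y) : Ext1Zero A (R.obj Y) := by
  refine of_exists_retraction fun E i p w hS ↦ ?_
  have : Mono i := hS.mono_f
  have : Epi p := hS.epi_g
  have := adj.isLeftAdjoint
  have hLS : (ShortComplex.mk (L.map i) (L.map p)
      (by rw [← L.map_comp, w, L.map_zero])).ShortExact :=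
    .mk' (hS.exact.map_of_epi_of_preservesCokernel L hS.epi_g inferInstance)
      inferInstance inferInstance
  obtain ⟨ψ, hψ⟩ := h.exists_extension hLS (adj.counit.app Y)
  exact ⟨adj.homEquiv _ _ ψ, by
    rw [← adj.homEquiv_naturality_left, hψ, ← adj.homEquiv_symm_id, Equiv.apply_symm_apply]⟩

lemma leftAdjoint_obj (adj : L ⊣ R) {A : C} {Y : D} (h : Ext1Zero A (R.obj Y))
    (hR : ∀ {E : D} {i : Y ⟶ E} {p : E ⟶ L.obj A} {w : i ≫ p = 0},
      (ShortComplex.mk i p w).ShortExact → Epi (R.map p)) :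
    Ext1Zero (L.obj A) Y := by
  intro E i p w hS
  have : Mono i := hS.mono_f
  have := adj.isRightAdjoint
  have hRS : (ShortComplex.mk (R.map i) (R.map p)
      (by rw [← R.map_comp, w, R.map_zero])).ShortExact :=
    .mk' (hS.exact.map_of_mono_of_preservesKernel R hS.mono_f inferInstance)
      inferInstance (hR hS)
  obtain ⟨ψ, hψ⟩ := h.exists_lift hRS (adj.unit.app A)
  exact ⟨(adj.homEquiv _ _).symm ψ, by
    rw [← adj.homEquiv_naturality_right_symm, hψ, ← adj.homEquiv_id, Equiv.symm_apply_apply]⟩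

lemma of_rightAdjoint_obj (adj : L ⊣ R) [R.PreservesEpimorphisms] {X : C} {B : D}
    (h : Ext1Zero X (R.obj B)) : Ext1Zero (L.obj X) B :=
  have : R.op.PreservesMonomorphisms := ⟨fun f _ ↦ inferInstanceAs (Mono (R.map f.unop).op)⟩
  (of_leftAdjoint_obj adj.op h.op).unop

lemma rightAdjoint_obj (adj : L ⊣ R) {X : C} {B : D} (h : Ext1Zero (L.obj X) B)
    (hL : ∀ {E : C} {i : R.obj B ⟶ E} {p : E ⟶ X} {w : i ≫ p = 0},
      (ShortComplex.mk i p w).ShortExact → Mono (L.map i)) :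
    Ext1Zero X (R.obj B) :=
  (leftAdjoint_obj adj.op h.op fun hS ↦ have := hL hS.unop; inferInstanceAs (Epi (L.map _).op)).unop

end Adjunction

end Ext1Zero

end Ext1

section Complexes

open HomologicalComplex

variable {ι : Type*} {c : ComplexShape ι}

lemma exactAt_iff_epi_toCycles (K : HomologicalComplex 𝒜 c) {i j : ι} (hij : c.Rel i j) :
    K.ExactAt j ↔ Epi (K.toCycles i j) := by
  have hcoker := K.homologyIsCokernel i j (c.prev_eq' hij)
  rw [exactAt_iff_isZero_homology]
  refine ⟨fun h ↦ Preadditive.epi_of_isZero_cokernel' _ hcoker h, fun _ ↦ ?_⟩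
  refine IsZero.of_epi_eq_zero (K.homologyπ j) ?_
  rw [← cancel_epi (K.toCycles i j), toCycles_comp_homologyπ, comp_zero]

lemma exactAt_iff_mono_fromOpcycles (K : HomologicalComplex 𝒜 c) {i j : ι} (hij : c.Rel i j) :
    K.ExactAt i ↔ Mono (K.fromOpcycles i j) := by
  have hker := K.homologyIsKernel i j (c.next_eq' hij)
  rw [exactAt_iff_isZero_homology]
  refine ⟨fun h ↦ Preadditive.mono_of_isZero_kernel' _ hker h, fun _ ↦ ?_⟩
  refine IsZero.of_mono_eq_zero (K.homologyι i) ?_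
  rw [← cancel_mono (K.fromOpcycles i j), homologyι_comp_fromOpcycles, zero_comp]

lemma iCycles_comp_toCycles (K : HomologicalComplex 𝒜 c) (i j : ι) :
    K.iCycles i ≫ K.toCycles i j = 0 := by
  rw [← cancel_mono (K.iCycles j), Category.assoc, toCycles_i, iCycles_d, zero_comp]

lemma shortExact_iCycles_toCycles (K : HomologicalComplex 𝒜 c) {i j : ι} (hij : c.Rel i j)
    (hK : K.ExactAt j) :
    (ShortComplex.mk (K.iCycles i) (K.toCycles i j) (iCycles_comp_toCycles K i j)).ShortExact := by
  refine .mk' (ShortComplex.exact_of_f_is_kernel _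
    (KernelFork.IsLimit.ofι' _ _ fun k hk ↦ ?_)) inferInstance
    ((exactAt_iff_epi_toCycles K hij).1 hK)
  exact ⟨K.liftCycles k j (c.next_eq' hij) (by rw [← K.toCycles_i i j, reassoc_of% hk, zero_comp]),
    K.liftCycles_i _ _ _ _⟩

lemma isIso_opcyclesToCycles (K : HomologicalComplex 𝒜 c) {i j : ι} (hij : c.Rel i j)
    (hi : K.ExactAt i) (hj : K.ExactAt j) : IsIso (K.opcyclesToCycles i j) := by
  have hmono := (exactAt_iff_mono_fromOpcycles K hij).1 hi
  have hepi := (exactAt_iff_epi_toCycles K hij).1 hj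
  rw [← K.opcyclesToCycles_iCycles] at hmono
  rw [← K.pOpcycles_opcyclesToCycles] at hepi
  have : Mono (K.opcyclesToCycles i j) := mono_of_mono _ (K.iCycles j)
  have : Epi (K.opcyclesToCycles i j) := epi_of_epi (K.pOpcycles i) _
  exact isIso_of_mono_of_epi _

lemma epi_cyclesMap {K L : HomologicalComplex 𝒜 c} (φ : K ⟶ L) (j : ι)
    [Epi (φ.f (c.prev j))] [Epi (homologyMap φ j)] : Epi (cyclesMap φ j) := by
  refine Preadditive.epi_of_cancel_zero _ fun {Z} u hu ↦ ?_
  have hu' : L.toCycles (c.prev j) j ≫ u = 0 := by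
    have hφ : K.toCycles (c.prev j) j ≫ cyclesMap φ j = φ.f _ ≫ L.toCycles (c.prev j) j := by
      simp [← cancel_mono (L.iCycles j)]
    rw [← cancel_epi (φ.f (c.prev j)), ← reassoc_of% hφ, hu, comp_zero, comp_zero]
  obtain ⟨v, rfl⟩ := CokernelCofork.IsColimit.desc' (L.homologyIsCokernel _ j rfl) u hu'
  dsimp at hu ⊢
  have hv : v = 0 := by
    rw [← cancel_epi (homologyMap φ j), ← cancel_epi (K.homologyπ j), comp_zero, comp_zero,
      homologyπ_naturality_assoc, hu]
  rw [hv, comp_zero]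

lemma mono_opcyclesMap {K L : HomologicalComplex 𝒜 c} (φ : K ⟶ L) (i : ι)
    [Mono (φ.f (c.next i))] [Mono (homologyMap φ i)] : Mono (opcyclesMap φ i) := by
  refine Preadditive.mono_of_cancel_zero _ fun {Z} u hu ↦ ?_
  have hu' : u ≫ K.fromOpcycles i (c.next i) = 0 := by
    have hφ : opcyclesMap φ i ≫ L.fromOpcycles i (c.next i) = K.fromOpcycles i _ ≫ φ.f _ := by
      simp [← cancel_epi (K.pOpcycles i)]
    rw [← cancel_mono (φ.f (c.next i)), Category.assoc, ← hφ, reassoc_of% hu, zero_comp, zero_comp]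
  obtain ⟨v, rfl⟩ := KernelFork.IsLimit.lift' (K.homologyIsKernel i _ rfl) u hu'
  dsimp at hu ⊢
  have hv : v = 0 := by
    rw [← cancel_mono (homologyMap φ i), ← cancel_mono (L.homologyι i), zero_comp, zero_comp,
      Category.assoc, homologyι_naturality, ← Category.assoc, hu]
  rw [hv, zero_comp]

section ShortExact

variable {K₁ K₂ K₃ : HomologicalComplex 𝒜 c} {f : K₁ ⟶ K₂} {g : K₂ ⟶ K₃} {w : f ≫ g = 0}
  {i j : ι}

lemma epi_cyclesMap_of_shortExact (hS : (ShortComplex.mk f g w).ShortExact) (hij : c.Rel i j)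
    (h₁ : K₁.ExactAt j) : Epi (cyclesMap g i) := by
  have : Epi g := hS.epi_g
  have : Epi (homologyMap g i) := (hS.homology_exact₃ i j hij).epi_f
    (((exactAt_iff_isZero_homology _ _).1 h₁).eq_of_tgt _ _)
  exact epi_cyclesMap g i

lemma mono_opcyclesMap_of_shortExact (hS : (ShortComplex.mk f g w).ShortExact) (hij : c.Rel i j)
    (h₃ : K₃.ExactAt i) : Mono (opcyclesMap f j) := by
  have : Mono f := hS.mono_f
  have : Mono (homologyMap f j) := (hS.homology_exact₁ i j hij).mono_g
    (((exactAt_iff_isZero_homology _ _).1 h₃).eq_of_src _ _)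
  exact mono_opcyclesMap f j

end ShortExact

variable [DecidableEq ι]

/-- Maps `Sʲ(A) ⟶ K` correspond to maps from `A` to the cycles of `K`. -/
noncomputable def singleHomEquivCycles (j : ι) (A : 𝒜) (K : HomologicalComplex 𝒜 c) :
    ((single 𝒜 c j).obj A ⟶ K) ≃ (A ⟶ K.cycles j) where
  toFun φ := K.liftCycles ((singleObjXSelf c j A).inv ≫ φ.f j) _ rfl (by simp)
  invFun ψ := mkHomFromSingle (ψ ≫ K.iCycles j) (by simp)
  left_inv φ := from_single_hom_ext (by simp)
  right_inv ψ := by simp [← cancel_mono (K.iCycles j)]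

lemma singleHomEquivCycles_symm_comp_map {j : ι} {A A' : 𝒜} {K : HomologicalComplex 𝒜 c}
    (φ : A' ⟶ A) (ψ : A ⟶ K.cycles j) :
    (singleHomEquivCycles j A' K).symm (φ ≫ ψ) =
      (single 𝒜 c j).map φ ≫ (singleHomEquivCycles j A K).symm ψ :=
  from_single_hom_ext (by simp [singleHomEquivCycles, single_map_f_self])

lemma singleHomEquivCycles_comp {j : ι} {A : 𝒜} {K L : HomologicalComplex 𝒜 c}
    (φ : (single 𝒜 c j).obj A ⟶ K) (ψ : K ⟶ L) :
    singleHomEquivCycles j A L (φ ≫ ψ) = singleHomEquivCycles j A K φ ≫ cyclesMap ψ j := by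
  simp [singleHomEquivCycles]

variable (c) in
/-- The adjunction `Sʲ ⊣ Zʲ` between spheres and cycles. -/
noncomputable def singleCyclesAdjunction (j : ι) : single 𝒜 c j ⊣ cyclesFunctor 𝒜 c j :=
  .mkOfHomEquiv
    { homEquiv := singleHomEquivCycles j
      homEquiv_naturality_left_symm := singleHomEquivCycles_symm_comp_map
      homEquiv_naturality_right := singleHomEquivCycles_comp }

/-- Maps `K ⟶ Sʲ(A)` correspond to maps from the opcycles of `K` to `A`. -/
noncomputable def opcyclesHomEquivSingle (j : ι) (K : HomologicalComplex 𝒜 c) (A : 𝒜) :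
    (K.opcycles j ⟶ A) ≃ (K ⟶ (single 𝒜 c j).obj A) where
  toFun ψ := mkHomToSingle (K.pOpcycles j ≫ ψ) (by simp)
  invFun φ := K.descOpcycles (φ.f j ≫ (singleObjXSelf c j A).hom) _ rfl
    (by simp [← φ.comm_assoc])
  left_inv ψ := by simp [← cancel_epi (K.pOpcycles j)]
  right_inv φ := to_single_hom_ext (by simp)

lemma opcyclesHomEquivSingle_symm_comp {j : ι} {K L : HomologicalComplex 𝒜 c} {A : 𝒜}
    (φ : K ⟶ L) (ψ : L ⟶ (single 𝒜 c j).obj A) :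
    (opcyclesHomEquivSingle j K A).symm (φ ≫ ψ) =
      opcyclesMap φ j ≫ (opcyclesHomEquivSingle j L A).symm ψ := by
  simp [opcyclesHomEquivSingle]

lemma opcyclesHomEquivSingle_comp_map {j : ι} {K : HomologicalComplex 𝒜 c} {A A' : 𝒜}
    (φ : K.opcycles j ⟶ A) (ψ : A ⟶ A') :
    opcyclesHomEquivSingle j K A' (φ ≫ ψ) =
      opcyclesHomEquivSingle j K A φ ≫ (single 𝒜 c j).map ψ :=
  to_single_hom_ext (by simp [opcyclesHomEquivSingle, single_map_f_self])

variable (c) in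
/-- The adjunction `K ↦ Kʲ / im d ⊣ Sʲ` between opcycles and spheres. -/
noncomputable def opcyclesSingleAdjunction (j : ι) : opcyclesFunctor 𝒜 c j ⊣ single 𝒜 c j :=
  .mkOfHomEquiv
    { homEquiv := opcyclesHomEquivSingle j
      homEquiv_naturality_left_symm := opcyclesHomEquivSingle_symm_comp
      homEquiv_naturality_right := opcyclesHomEquivSingle_comp_map }

section Double

variable {A B : 𝒜} (f : A ⟶ B) {i j : ι} (hij : c.Rel i j) (hne : i ≠ j)

/-- The inclusion of the target of `f` into the two-term complex `f : A ⟶ B`. -/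
noncomputable def singleToDouble : (single 𝒜 c j).obj B ⟶ double f hij :=
  mkHomFromSingle (doubleXIso₁ f hij hne).inv fun k _ ↦ by
    rw [double_d_eq_zero₀ _ _ _ _ hne.symm, comp_zero]

/-- The projection of the two-term complex `f : A ⟶ B` onto the source of `f`. -/
noncomputable def doubleToSingle : double f hij ⟶ (single 𝒜 c i).obj A :=
  mkHomToSingle (doubleXIso₀ f hij).hom fun k _ ↦ by
    rw [double_d_eq_zero₁ _ _ _ _ hne, zero_comp]

lemma singleToDouble_comp_doubleToSingle :
    singleToDouble f hij hne ≫ doubleToSingle f hij hne = 0 := by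
  apply from_single_hom_ext
  exact (isZero_single_obj_X c i A j hne.symm).eq_of_tgt _ _

lemma isIso_singleToDouble_f : IsIso ((singleToDouble f hij hne).f j) := by
  rw [singleToDouble, mkHomFromSingle_f]
  infer_instance

lemma isIso_doubleToSingle_f : IsIso ((doubleToSingle f hij hne).f i) := by
  rw [doubleToSingle, mkHomToSingle_f]
  infer_instance

lemma shortExact_singleToDouble_doubleToSingle :
    (ShortComplex.mk _ _ (singleToDouble_comp_doubleToSingle f hij hne)).ShortExact := by
  refine shortExact_of_degreewise_shortExact _ fun k ↦ ?_
  by_cases hk : k = i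
  · subst hk
    exact (ShortComplex.Splitting.ofIsZeroOfIsIso _ (isZero_single_obj_X c j B k hne)
      (isIso_doubleToSingle_f f hij hne)).shortExact
  · refine (ShortComplex.Splitting.ofIsIsoOfIsZero _ ?_ (isZero_single_obj_X c i A k hk)).shortExact
    by_cases hkj : k = j
    · subst hkj
      exact isIso_singleToDouble_f f hij hne
    · exact (isZero_single_obj_X c j B k hkj).isIso (isZero_double_X f hij k hk hkj) _

end Double

section Ext1ZeroSingle

variable {A B : 𝒜} {K : HomologicalComplex 𝒜 c} {i j : ι}

lemma Ext1Zero.cycles (h : Ext1Zero ((single 𝒜 c j).obj A) K) : Ext1Zero A (K.cycles j) :=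
  h.of_leftAdjoint_obj (singleCyclesAdjunction c j)

lemma Ext1Zero.single_left (hij : c.Rel i j) (hK : K.ExactAt j) (h : Ext1Zero A (K.cycles i)) :
    Ext1Zero ((single 𝒜 c i).obj A) K :=
  h.leftAdjoint_obj (singleCyclesAdjunction c i) fun hS ↦ epi_cyclesMap_of_shortExact hS hij hK

lemma Ext1Zero.opcycles (h : Ext1Zero K ((single 𝒜 c j).obj B)) : Ext1Zero (K.opcycles j) B :=
  h.of_rightAdjoint_obj (opcyclesSingleAdjunction c j)

lemma Ext1Zero.single_right (hij : c.Rel i j) (hK : K.ExactAt i) (h : Ext1Zero (K.opcycles j) B) :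
    Ext1Zero K ((single 𝒜 c j).obj B) :=
  h.rightAdjoint_obj (opcyclesSingleAdjunction c j) fun hS ↦
    mono_opcyclesMap_of_shortExact hS hij hK

lemma exactAt_of_ext1Zero_single_left (hij : c.Rel i j) (hne : i ≠ j)
    (q : A ⟶ K.cycles j) [Epi q] (h : Ext1Zero ((single 𝒜 c i).obj A) K) : K.ExactAt j := by
  obtain ⟨ψ, hψ⟩ := h.exists_extension (shortExact_singleToDouble_doubleToSingle (𝟙 A) hij hne)
    ((singleHomEquivCycles j A K).symm q)
  have hψj : (doubleXIso₁ (𝟙 A) hij hne).inv ≫ ψ.f j = q ≫ K.iCycles j := by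
    rw [← cancel_epi (singleObjXSelf c j A).hom]
    simpa [singleToDouble, singleHomEquivCycles] using congr_hom hψ j
  have hq : ((doubleXIso₀ (𝟙 A) hij).inv ≫ ψ.f i) ≫ K.toCycles i j = q := by
    rw [← cancel_mono (K.iCycles j), ← hψj]
    simp [double_d _ _ hne]
  exact (exactAt_iff_epi_toCycles K hij).2 (epi_of_epi_fac hq)

lemma exactAt_of_ext1Zero_single_right (hij : c.Rel i j) (hne : i ≠ j)
    (q : K.opcycles i ⟶ B) [Mono q] (h : Ext1Zero K ((single 𝒜 c j).obj B)) : K.ExactAt i := by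
  obtain ⟨ψ, hψ⟩ := h.exists_lift (shortExact_singleToDouble_doubleToSingle (𝟙 B) hij hne)
    (opcyclesHomEquivSingle i K B q)
  have hψi : ψ.f i ≫ (doubleXIso₀ (𝟙 B) hij).hom = K.pOpcycles i ≫ q := by
    rw [← cancel_mono (singleObjXSelf c i B).inv]
    simpa [doubleToSingle, opcyclesHomEquivSingle] using congr_hom hψ i
  have hq : K.fromOpcycles i j ≫ ψ.f j ≫ (doubleXIso₁ (𝟙 B) hij hne).hom = q := by
    rw [← cancel_epi (K.pOpcycles i), ← hψi]
    simp [← ψ.comm_assoc, double_d _ _ hne]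
  exact (exactAt_iff_mono_fromOpcycles K hij).2 (mono_of_mono_fac hq)

end Ext1ZeroSingle

end Complexes

section Tilde

open HomologicalComplex

variable {𝓐 𝓑 : Set 𝒜}

theorem forall_ext1Zero_sph_left_iff (hgen : ∀ X : 𝒜, ∃ A ∈ 𝓐, ∃ p : A ⟶ X, Epi p)
    (Y : CochainComplex 𝒜 ℤ) :
    (∀ A ∈ 𝓐, ∀ n : ℤ, Ext1Zero (sph n A) Y) ↔ Y ∈ Tilde (rightPerp 𝓐) := by
  refine ⟨fun h ↦ ?_, fun ⟨hex, _, hcycles⟩ A hA n ↦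
    (hcycles n A hA).single_left (show n + 1 = n + 1 from rfl) (hex (n + 1))⟩
  have hex (n : ℤ) : Y.ExactAt n := by
    obtain ⟨A, hA, q, hq⟩ := hgen (Y.cycles n)
    exact exactAt_of_ext1Zero_single_left (sub_add_cancel n 1) (sub_one_lt n).ne q (h A hA (n - 1))
  have hcycles (n : ℤ) : Y.cycles n ∈ rightPerp 𝓐 := fun A hA ↦ (h A hA n).cycles
  exact ⟨hex, fun n A hA ↦ .of_shortExact_right (shortExact_iCycles_toCycles Y rfl (hex (n + 1)))
    (hcycles n A hA) (hcycles (n + 1) A hA), hcycles⟩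

theorem forall_ext1Zero_sph_right_iff (hcogen : ∀ X : 𝒜, ∃ B ∈ 𝓑, ∃ i : X ⟶ B, Mono i)
    (X : CochainComplex 𝒜 ℤ) :
    (∀ B ∈ 𝓑, ∀ n : ℤ, Ext1Zero X (sph n B)) ↔ X ∈ Tilde (leftPerp 𝓑) := by
  refine ⟨fun h ↦ ?_, fun ⟨hex, _, hcycles⟩ B hB n ↦ ?_⟩
  · have hex (n : ℤ) : X.ExactAt n := by
      obtain ⟨B, hB, q, hq⟩ := hcogen (X.opcycles n)
      exact exactAt_of_ext1Zero_single_right rfl (lt_add_one n).ne q (h B hB (n + 1))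
    have hcycles (n : ℤ) : X.cycles n ∈ leftPerp 𝓑 := fun B hB ↦
      have := isIso_opcyclesToCycles X (sub_add_cancel n 1) (hex _) (hex n)
      (h B hB (n - 1)).opcycles.of_iso_left (asIso (X.opcyclesToCycles (n - 1) n))
    exact ⟨hex, fun n B hB ↦ .of_shortExact_left (shortExact_iCycles_toCycles X rfl (hex (n + 1)))
      (hcycles n B hB) (hcycles (n + 1) B hB), hcycles⟩
  · have := isIso_opcyclesToCycles X (show n + 1 = n + 1 from rfl) (hex n) (hex (n + 1))
    exact .single_right (sub_add_cancel n 1) (hex (n - 1))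
      ((hcycles (n + 1) B hB).of_iso_left (asIso (X.opcyclesToCycles n (n + 1))).symm)

end Tilde

theorem stmt_13_general (𝓐 𝓑 : Set 𝒜)
    (hgen : ∀ X : 𝒜, ∃ A ∈ 𝓐, ∃ p : A ⟶ X, Epi p)
    (hcogen : ∀ X : 𝒜, ∃ B ∈ 𝓑, ∃ i : X ⟶ B, Mono i) :
    (∀ Y : CochainComplex 𝒜 ℤ,
      (∀ A ∈ 𝓐, ∀ n : ℤ, Ext1Zero (sph n A) Y) ↔ Y ∈ Tilde (rightPerp 𝓐)) ∧
    (∀ X : CochainComplex 𝒜 ℤ,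
      (∀ B ∈ 𝓑, ∀ n : ℤ, Ext1Zero X (sph n B)) ↔ X ∈ Tilde (leftPerp 𝓑)) :=
  ⟨forall_ext1Zero_sph_left_iff hgen, forall_ext1Zero_sph_right_iff hcogen⟩

/-- Let `(𝓐, 𝓑)` be a cotorsion pair in an abelian category `𝒜` with `𝓐` generating
and `𝓑` cogenerating.  Then a cochain complex `Y` satisfies
`Ext¹(Sⁿ(A), Y) = 0` for all `A ∈ 𝓐` and `n ∈ ℤ` if and only if `Y ∈ B̃`; dually, a
cochain complex `X` satisfies `Ext¹(X, Sⁿ(B)) = 0` for all `B ∈ 𝓑` and `n ∈ ℤ` if and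
only if `X ∈ Ã`. -/
theorem stmt_13 (𝓐 𝓑 : Set 𝒜) (hpair : IsCotorsionPair 𝓐 𝓑)
    (hgen : ∀ X : 𝒜, ∃ A ∈ 𝓐, ∃ p : A ⟶ X, Epi p)
    (hcogen : ∀ X : 𝒜, ∃ B ∈ 𝓑, ∃ i : X ⟶ B, Mono i) :
    (∀ Y : CochainComplex 𝒜 ℤ,
      (∀ A ∈ 𝓐, ∀ n : ℤ, Ext1Zero (sph n A) Y) ↔ Y ∈ Tilde 𝓑) ∧
    (∀ X : CochainComplex 𝒜 ℤ,
      (∀ B ∈ 𝓑, ∀ n : ℤ, Ext1Zero X (sph n B)) ↔ X ∈ Tilde 𝓐) := by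
  have h := stmt_13_general 𝓐 𝓑 hgen hcogen
  rwa [← hpair.right_eq, ← hpair.left_eq] at h
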